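/- arXiv:1602.05661 — 4 statements merged into one kernel-verified Lean document; each statement's English description precedes it below -/
import Mathlib

section
/- Let g^1, …, g^k : R^l → R be continuously differentiable functions and U := {u ∈ R^l : g^i(u) ≤ 0, i = 1, …, k}, and for u ∈ U set I[u] := {i : g^i(u) = 0}. Assume the linearly independent constraint qualification (LICQ) holds at every u in the boundary of U, i.e. the gradients {∇g^i(u) : i ∈ I[u]} are linearly independent. Then for every u ∈ U the adjacent cone of U at u is T_U(u) = {v ∈ R^l : ⟨∇g^i(u), v⟩ ≤ 0 for all i ∈ I[u]}. -/
/-!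
The inclusion of the adjacent cone in the linearized cone needs no constraint qualification: if
`v` is adjacent, then `U` contains points `u + h v + o(h)`, and the first-order expansion of an
active `g i` along these points forces `⟪∇g i (u), v⟫ ≤ 0`.

For the converse at a boundary point, linear independence of the active gradients yields a vector
`w` with `⟪∇g i (u), w⟫ = -1` for every active `i`. If `v` is in the linearized cone and `ε > 0`,
then `v + ε w` is a strict descent direction for all active constraints, so `u + h (v + ε w) ∈ U`
for small `h > 0`, and `dist (u + h v, U) / h ≤ ε ‖w‖`. At an interior point of `U` the adjacent
cone is the whole space.
-/

open Filter Set
open scoped RealInnerProductSpace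

/-- The adjacent cone of a set `K` at a point `x`:
`T_K(x) := {v : lim_{h→0⁺} dist(x+hv, K)/h = 0}`. -/
def adjacentCone {X : Type*} [NormedAddCommGroup X] [NormedSpace ℝ X]
    (K : Set X) (x : X) : Set X :=
  {v | Tendsto (fun h : ℝ => Metric.infDist (x + h • v) K / h)
        (nhdsWithin 0 (Set.Ioi 0)) (nhds 0)}

/-- A linearly independent family admits a vector whose inner product with every member is `-1`:
the functional sending each member to `-1` extends to the space, and is then represented by
Riesz. -/
lemma exists_inner_eq_neg_one {ι E : Type*} [NormedAddCommGroup E] [InnerProductSpace ℝ E]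
    [FiniteDimensional ℝ E] {f : ι → E} (hf : LinearIndependent ℝ f) :
    ∃ w : E, ∀ i, ⟪f i, w⟫ = -1 := by
  obtain ⟨r, hr⟩ := LinearMap.exists_leftInverse_of_injective
    (Finsupp.linearCombination ℝ f) (LinearMap.ker_eq_bot.2 hf)
  haveI : CompleteSpace E := FiniteDimensional.complete ℝ E
  let φ : E →ₗ[ℝ] ℝ := (Finsupp.linearCombination ℝ (fun _ : ι => (-1 : ℝ))) ∘ₗ r
  refine ⟨(InnerProductSpace.toDual ℝ E).symm (LinearMap.toContinuousLinearMap φ), fun i => ?_⟩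
  have h1 : r (f i) = Finsupp.single i 1 := by
    have := LinearMap.congr_fun hr (Finsupp.single i 1)
    simpa using this
  rw [real_inner_comm, InnerProductSpace.toDual_symm_apply]
  simp [φ, h1]

/-- A strict first-order decrease makes an active constraint hold for small positive steps. -/
lemma eventually_nonpos_of_inner_neg {E : Type*} [NormedAddCommGroup E] [InnerProductSpace ℝ E]
    [CompleteSpace E] {f : E → ℝ} {u d : E} (hf : DifferentiableAt ℝ f u) (h0 : f u = 0)
    (hd : ⟪gradient f u, d⟫ < 0) :
    ∀ᶠ h : ℝ in nhdsWithin 0 (Ioi 0), f (u + h • d) ≤ 0 := by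
  have hF : HasFDerivAt f (InnerProductSpace.toDual ℝ E (gradient f u)) u :=
    hf.hasGradientAt.hasFDerivAt
  have hline : HasDerivAt (fun h : ℝ => u + h • d) d 0 := by
    simpa using ((hasDerivAt_id (0 : ℝ)).smul_const d).const_add u
  have hcomp : HasDerivAt (fun h : ℝ => f (u + h • d)) ⟪gradient f u, d⟫ 0 := by
    have hF' : HasFDerivAt f (InnerProductSpace.toDual ℝ E (gradient f u)) (u + (0 : ℝ) • d) := by
      simpa using hF
    simpa [Function.comp_def] using hF'.comp_hasDerivAt (0 : ℝ) hline
  filter_upwards [hcomp.tendsto_slope_zero_right.eventually (gt_mem_nhds hd),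
    self_mem_nhdsWithin] with h hh hpos
  have hpos' : 0 < h := hpos
  simp only [zero_add, zero_smul, add_zero, h0, sub_zero, smul_eq_mul] at hh
  by_contra! hcon
  exact absurd hh (not_lt.2 (by positivity))

/-- Adjacent directions are first-order nonincreasing for any constraint active at `u`; no
constraint qualification is involved. -/
lemma inner_gradient_nonpos_of_mem_adjacentCone {E : Type*} [NormedAddCommGroup E]
    [InnerProductSpace ℝ E] [CompleteSpace E] {f : E → ℝ} {K : Set E} {u v : E}
    (hf : DifferentiableAt ℝ f u) (h0 : f u = 0) (huK : u ∈ K) (hK : ∀ z ∈ K, f z ≤ 0)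
    (hv : v ∈ adjacentCone K u) : ⟪gradient f u, v⟫ ≤ 0 := by
  set a := gradient f u with ha
  have key : ∀ ε : ℝ, 0 < ε → ε ≤ 1 → ⟪a, v⟫ ≤ ε * (‖a‖ + ‖v‖ + 1) := by
    intro ε hε hε1
    have hF : HasFDerivAt f (InnerProductSpace.toDual ℝ E a) u := hf.hasGradientAt.hasFDerivAt
    obtain ⟨δ, hδ, hball⟩ := Metric.eventually_nhds_iff.1 (hF.isLittleO.def hε)
    have hsmall : ∀ᶠ h : ℝ in nhdsWithin 0 (Ioi 0), h * (‖v‖ + 1) < δ := by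
      have : Tendsto (fun h : ℝ => h * (‖v‖ + 1)) (nhdsWithin 0 (Ioi 0)) (nhds 0) := by
        have hc : Continuous (fun h : ℝ => h * (‖v‖ + 1)) := by fun_prop
        simpa using (hc.tendsto 0).mono_left nhdsWithin_le_nhds
      exact this.eventually (gt_mem_nhds hδ)
    have hv' : Tendsto (fun h : ℝ => Metric.infDist (u + h • v) K / h)
        (nhdsWithin 0 (Ioi 0)) (nhds 0) := hv
    obtain ⟨h, hh1, hh2, hpos⟩ := (hsmall.and
      ((hv'.eventually (gt_mem_nhds hε)).and self_mem_nhdsWithin)).exists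
    have hpos : 0 < h := hpos
    rw [div_lt_iff₀ hpos] at hh2
    obtain ⟨z, hzK, hz⟩ := (Metric.infDist_lt_iff ⟨u, huK⟩).1 hh2
    -- The remainder `r` is the deviation of `z ∈ K` from the ray point `u + h v`.
    obtain ⟨r, rfl⟩ : ∃ r, z = u + h • v + r := ⟨z - (u + h • v), by abel⟩
    have hr : ‖r‖ < ε * h := by simpa [dist_eq_norm] using hz
    have hzu : ‖h • v + r‖ ≤ h * (‖v‖ + ε) := by
      calc ‖h • v + r‖ ≤ ‖h • v‖ + ‖r‖ := norm_add_le _ _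
        _ ≤ h * ‖v‖ + ε * h := by
          rw [norm_smul, Real.norm_of_nonneg hpos.le]; linarith
        _ = _ := by ring
    have hzu1 : ‖h • v + r‖ ≤ h * (‖v‖ + 1) := hzu.trans (by gcongr)
    have e1 : u + h • v + r - u = h • v + r := by abel
    have hexp := hball (y := u + h • v + r) (by
      rw [dist_eq_norm, e1]; exact hzu1.trans_lt hh1)
    rw [e1, h0, sub_zero, InnerProductSpace.toDual_apply_apply, inner_add_right,
      real_inner_smul_right, Real.norm_eq_abs] at hexp
    have h3 := (abs_le.1 hexp).1
    have h4 := hK _ hzK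
    have h5 : -(‖a‖ * ‖r‖) ≤ ⟪a, r⟫ := (abs_le.1 (abs_real_inner_le_norm a r)).1
    have h6 : ‖a‖ * ‖r‖ ≤ ‖a‖ * (ε * h) := by gcongr
    have h7 : ε * ‖h • v + r‖ ≤ ε * (h * (‖v‖ + 1)) := by gcongr
    have h8 : h * ⟪a, v⟫ ≤ h * (ε * (‖a‖ + ‖v‖ + 1)) := by nlinarith
    exact le_of_mul_le_mul_left h8 hpos
  by_contra! hcon
  have hC : 0 < ‖a‖ + ‖v‖ + 1 := by positivity
  -- `ε` is chosen so that `ε * (‖a‖ + ‖v‖ + 1) ≤ ⟪a, v⟫ / 2`.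
  have := key (min 1 (⟪a, v⟫ / (2 * (‖a‖ + ‖v‖ + 1)))) (by positivity) (min_le_left _ _)
  have h2 : min 1 (⟪a, v⟫ / (2 * (‖a‖ + ‖v‖ + 1))) * (‖a‖ + ‖v‖ + 1) ≤ ⟪a, v⟫ / 2 := by
    calc _ ≤ (⟪a, v⟫ / (2 * (‖a‖ + ‖v‖ + 1))) * (‖a‖ + ‖v‖ + 1) := by
          gcongr; exact min_le_right _ _
      _ = _ := by field_simp
  linarith

/-- A sufficient condition for adjacency: `v` can be perturbed along a fixed `w` by arbitrarily
small amounts to become a feasible direction. -/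
lemma mem_adjacentCone_of_perturbation {X : Type*} [NormedAddCommGroup X] [NormedSpace ℝ X]
    {K : Set X} {u v w : X}
    (hfeas : ∀ ε : ℝ, 0 < ε → ∀ᶠ h : ℝ in nhdsWithin 0 (Ioi 0), u + h • (v + ε • w) ∈ K) :
    v ∈ adjacentCone K u := by
  refine Metric.tendsto_nhds.2 fun η hη => ?_
  have hW : 0 < ‖w‖ + 1 := by positivity
  have hε : 0 < η / (‖w‖ + 1) := by positivity
  filter_upwards [hfeas _ hε, self_mem_nhdsWithin] with h hh hpos
  have hpos : 0 < h := hpos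
  have hle := Metric.infDist_le_dist_of_mem (x := u + h • v) hh
  have e : dist (u + h • v) (u + h • (v + (η / (‖w‖ + 1)) • w)) = h * (η / (‖w‖ + 1) * ‖w‖) := by
    rw [dist_comm, dist_eq_norm, smul_add, ← add_assoc, add_sub_cancel_left, norm_smul, norm_smul,
      Real.norm_of_nonneg hpos.le, Real.norm_of_nonneg hε.le]
  rw [e] at hle
  rw [dist_zero_right, Real.norm_of_nonneg (div_nonneg Metric.infDist_nonneg hpos.le),
    div_lt_iff₀ hpos]
  have : η / (‖w‖ + 1) * ‖w‖ < η := by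
    rw [div_mul_eq_mul_div, div_lt_iff₀ hW]; nlinarith
  nlinarith

/-- Let `g^1, …, g^k : ℝ^l → ℝ` be `C¹`, `U := {u : g^i(u) ≤ 0 ∀ i}`, and assume the
LICQ holds at every boundary point of `U` (the active gradients are linearly
independent).  Then for every `u ∈ U`,
`T_U(u) = {v : ⟨∇g^i(u), v⟩ ≤ 0 for all i with g^i(u) = 0}`. -/
theorem adjacentCone_eq_of_LICQ {l k : ℕ}
    (g : Fin k → EuclideanSpace ℝ (Fin l) → ℝ)
    (hg : ∀ i, ContDiff ℝ 1 (g i))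
    (U : Set (EuclideanSpace ℝ (Fin l)))
    (hU : U = {u | ∀ i, g i u ≤ 0})
    (hLICQ : ∀ u ∈ frontier U,
      LinearIndependent ℝ (fun i : {i : Fin k // g i u = 0} => gradient (g i.1) u)) :
    ∀ u ∈ U, adjacentCone U u =
      {v : EuclideanSpace ℝ (Fin l) | ∀ i : Fin k, g i u = 0 → ⟪gradient (g i) u, v⟫ ≤ 0} := by
  intro u hu
  have hdiff : ∀ i, DifferentiableAt ℝ (g i) u := fun i =>
    ((hg i).differentiable one_ne_zero) u
  have hray : ∀ d : EuclideanSpace ℝ (Fin l),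
      Tendsto (fun h : ℝ => u + h • d) (nhdsWithin 0 (Ioi 0)) (nhds u) := by
    intro d
    have hc : Continuous (fun h : ℝ => u + h • d) := by fun_prop
    simpa using (hc.tendsto 0).mono_left nhdsWithin_le_nhds
  ext v
  constructor
  · intro hv i hi
    refine inner_gradient_nonpos_of_mem_adjacentCone (hdiff i) hi hu (fun z hz => ?_) hv
    rw [hU] at hz
    exact hz i
  · intro hv
    by_cases hint : u ∈ interior U
    · refine mem_adjacentCone_of_perturbation (w := 0) fun ε _ => ?_
      exact (hray _).eventually (mem_interior_iff_mem_nhds.1 hint)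
    · obtain ⟨w, hw⟩ := exists_inner_eq_neg_one (hLICQ u ⟨subset_closure hu, hint⟩)
      refine mem_adjacentCone_of_perturbation (w := w) fun ε hε => ?_
      have hall : ∀ᶠ h : ℝ in nhdsWithin 0 (Ioi 0), ∀ i, g i (u + h • (v + ε • w)) ≤ 0 := by
        refine eventually_all.2 fun i => ?_
        by_cases hi : g i u = 0
        · refine eventually_nonpos_of_inner_neg (hdiff i) hi ?_
          have h1 : ⟪gradient (g i) u, w⟫ = -1 := hw ⟨i, hi⟩
          have h2 := hv i hi
          rw [inner_add_right, real_inner_smul_right, h1]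
          linarith
        · have hu' := hu
          rw [hU] at hu'
          have hlt : g i u < 0 := lt_of_le_of_ne (hu' i) hi
          have ht := (hdiff i).continuousAt.tendsto.comp (hray (v + ε • w))
          exact (ht.eventually (gt_mem_nhds hlt)).mono fun h hh => le_of_lt hh
      rw [hU]
      exact hall
end

section
/- Let T > 0, (Ω, ℱ, P) a complete probability space with filtration 𝔽 = (ℱ_t)_{t∈[0,T]}, 𝒢 := {A ∈ ℬ([0,T])⊗ℱ : A_t ∈ ℱ_t for every t ∈ [0,T]}, and let ([0,T]×Ω, 𝒢*, μ*) be the completion of ([0,T]×Ω, 𝒢, λ×P), where λ is Lebesgue measure. Let U be a nonempty closed subset of R^l and 𝒰*_ad := {u : [0,T]×Ω → R^l : u is 𝒢*-measurable, u(t,ω) ∈ U for μ*-a.e. (t,ω), and ∫|u|² dμ* < ∞}. Then for every u ∈ 𝒰*_ad: (i) the set-valued map (t,ω) ↦ T_U(u(t,ω)) is 𝒢*-measurable; and (ii) 𝒯*_u ⊆ T_{𝒰*_ad}(u), where 𝒯*_u := {v ∈ ℒ²_𝔽(0,T;R^l) : v(t,ω) ∈ T_U(u(t,ω)) for μ*-a.e.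 (t,ω)}, ℒ²_𝔽(0,T;R^l) denotes the space of 𝒢*-measurable, μ*-square-integrable R^l-valued functions on [0,T]×Ω, and T_{𝒰*_ad}(u) is the adjacent cone of 𝒰*_ad at u in ℒ²_𝔽(0,T;R^l). -/
/-!
The completed σ-algebra consists of the null measurable sets of `λ × P` on the progressive
σ-algebra, so that measurability of a function for it is the same as a.e. measurability.

Measurability of `p ↦ T_U(u p)`: the graph of `x ↦ T_U(x)` is Borel, hence for a Borel set `A` the
set of `x` with `T_U(x) ∩ A ≠ ∅` is a projection of a Borel set, i.e. analytic. Analytic sets are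
null measurable for every finite measure (`analyticSet_nullMeasurableSet`, proved by inner
approximation with continuous images of compact boxes of the Baire space); apply this to the law
of `u` and pull back.

Inclusion of cones: for `h > 0`, composing `u + h v` with a Borel almost-projection onto `U` gives
an admissible `g_h` with `‖u + h v - g_h‖ / h ≤ dist(u + h v, U) / h + h` pointwise. The right-hand
side tends to `0` a.e. because `v ∈ T_U(u)`, and it is dominated by `‖v‖ + 1` because `u ∈ U`, so
it tends to `0` in `L²` by dominated convergence.
-/


open MeasureTheory Filter Set
open scoped ENNReal

/-- The progressive σ-algebra
`𝒢 := {A ∈ ℬ([0,T]) ⊗ ℱ : A_t ∈ ℱ_t for every t ∈ [0,T]}` on `[0,T] × Ω`. -/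
def progSigma (T : ℝ) (Ω : Type*) [mΩ : MeasurableSpace Ω]
    (F : ℝ → MeasurableSpace Ω) : MeasurableSpace (Set.Icc (0 : ℝ) T × Ω) where
  MeasurableSet' A := MeasurableSet A ∧
    ∀ t : Set.Icc (0 : ℝ) T, MeasurableSet[F t.1] {ω : Ω | (t, ω) ∈ A}
  measurableSet_empty :=
    ⟨MeasurableSet.empty, fun t => by simp⟩
  measurableSet_compl := fun A hA =>
    ⟨hA.1.compl, fun t => by
      have : {ω : Ω | (t, ω) ∈ Aᶜ} = {ω : Ω | (t, ω) ∈ A}ᶜ := rfl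
      rw [this]; exact (hA.2 t).compl⟩
  measurableSet_iUnion := fun s hs =>
    ⟨MeasurableSet.iUnion fun n => (hs n).1, fun t => by
      have : {ω : Ω | (t, ω) ∈ ⋃ n, s n} = ⋃ n, {ω : Ω | (t, ω) ∈ s n} := by
        ext ω; simp
      rw [this]; exact MeasurableSet.iUnion fun n => (hs n).2 t⟩

lemma progSigma_le (T : ℝ) (Ω : Type*) [mΩ : MeasurableSpace Ω]
    (F : ℝ → MeasurableSpace Ω) :
    progSigma T Ω F ≤ (inferInstance : MeasurableSpace (Set.Icc (0 : ℝ) T × Ω)) :=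
  fun _ hA => hA.1

/-- Lebesgue measure on `[0, T]`, viewed as a subtype of `ℝ`. -/
noncomputable def lebIcc (T : ℝ) : Measure (Set.Icc (0 : ℝ) T) :=
  Measure.comap Subtype.val volume

/-- The measure `λ × P`, regarded as a measure on the progressive σ-algebra `𝒢`. -/
noncomputable def nuG (T : ℝ) (Ω : Type*) [mΩ : MeasurableSpace Ω]
    (F : ℝ → MeasurableSpace Ω) (P : Measure Ω) :
    @Measure (Set.Icc (0 : ℝ) T × Ω) (progSigma T Ω F) :=
  ((lebIcc T).prod P).trim (progSigma_le T Ω F)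

/-- The completion `𝒮*` of a σ-algebra `𝒮` under a measure `μ`: all sets `A` with
`E ⊆ A ⊆ F`, `E, F ∈ 𝒮` and `μ(F \ E) = 0`. -/
def completionSets {α : Type*} (m : MeasurableSpace α) (μ : @Measure α m) :
    Set (Set α) :=
  {A : Set α | ∃ E F : Set α, MeasurableSet[m] E ∧ MeasurableSet[m] F ∧
    E ⊆ A ∧ A ⊆ F ∧ μ (F \ E) = 0}

/-- A function on `[0,T] × Ω` is `𝒢*`-measurable if preimages of Borel sets belong to
the completion `𝒢*` of `𝒢` under `λ × P`. -/
def starMeasurable (T : ℝ) (Ω : Type*) [mΩ : MeasurableSpace Ω]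
    (F : ℝ → MeasurableSpace Ω) (P : Measure Ω) {l : ℕ}
    (u : Set.Icc (0 : ℝ) T × Ω → EuclideanSpace ℝ (Fin l)) : Prop :=
  ∀ B : Set (EuclideanSpace ℝ (Fin l)), MeasurableSet B →
    u ⁻¹' B ∈ completionSets (progSigma T Ω F) (nuG T Ω F P)

/-- The space `ℒ²_𝔽(0,T;ℝ^l)` of `𝒢*`-measurable, `μ*`-square-integrable functions. -/
def L2Star (T : ℝ) (Ω : Type*) [mΩ : MeasurableSpace Ω]
    (F : ℝ → MeasurableSpace Ω) (P : Measure Ω) (l : ℕ) :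
    Set (Set.Icc (0 : ℝ) T × Ω → EuclideanSpace ℝ (Fin l)) :=
  {v | starMeasurable T Ω F P v ∧ eLpNorm v 2 (nuG T Ω F P) < ⊤}

/-- The admissible set `𝒰*_ad := {u ∈ ℒ²_𝔽 : u(t,ω) ∈ U, μ*-a.e.}`. -/
def UadStar (T : ℝ) (Ω : Type*) [mΩ : MeasurableSpace Ω]
    (F : ℝ → MeasurableSpace Ω) (P : Measure Ω) {l : ℕ}
    (U : Set (EuclideanSpace ℝ (Fin l))) :
    Set (Set.Icc (0 : ℝ) T × Ω → EuclideanSpace ℝ (Fin l)) :=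
  {u ∈ L2Star T Ω F P l | ∀ᵐ p ∂(nuG T Ω F P), u p ∈ U}

/-- The adjacent cone, at `u`, of a subset `S` of a function space `W`, with respect
to the `L²(μ)`-distance: `{v ∈ W : lim_{h→0⁺} dist_{L²}(u + h v, S)/h = 0}`. -/
def adjacentConeL2 {α E : Type*} {mα : MeasurableSpace α} (μ : Measure α)
    [NormedAddCommGroup E] [NormedSpace ℝ E]
    (W S : Set (α → E)) (u : α → E) : Set (α → E) :=
  {v ∈ W | Tendsto
    (fun h : ℝ =>
      (⨅ g ∈ S, eLpNorm (fun p => (u p + h • v p) - g p) 2 μ) / ENNReal.ofReal h)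
    (nhdsWithin 0 (Set.Ioi 0)) (nhds 0)}

/-! ### Analytic sets are null measurable for finite measures -/

/-- Inner approximation by compact sets of the image of the Baire space. Coordinates are bounded
one after the other by a sequence `n`, losing no more mass than permitted, so that the compact set
`{x | ∀ k, x k ≤ n k}` is the intersection of boxes whose images all have measure `> c`. -/
lemma exists_isCompact_subset_range_le_measure {X : Type*} [MetricSpace X] [MeasurableSpace X]
    [BorelSpace X] (μ : Measure X) [IsFiniteMeasure μ] {f : (ℕ → ℕ) → X} (hf : Continuous f)
    {c : ℝ≥0∞} (hc : c < μ (range f)) :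
    ∃ K : Set X, IsCompact K ∧ K ⊆ range f ∧ c ≤ μ K := by
  have step : ∀ (k : ℕ) (D : Set (ℕ → ℕ)), ∃ m : ℕ, c < μ (f '' D) →
      c < μ (f '' (D ∩ {x | x k ≤ m})) := by
    intro k D
    by_cases h : c < μ (f '' D)
    · have hU : f '' D = ⋃ m : ℕ, f '' (D ∩ {x | x k ≤ m}) := by
        rw [← image_iUnion, ← inter_iUnion]
        congr 1
        symm
        rw [inter_eq_left]
        intro x _
        exact mem_iUnion.2 ⟨x k, le_refl (x k)⟩
      have hmono : Monotone fun m : ℕ => f '' (D ∩ {x | x k ≤ m}) := fun a b hab =>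
        image_mono (inter_subset_inter_right _ fun x (hx : x k ≤ a) => hx.trans hab)
      rw [hU, hmono.measure_iUnion, lt_iSup_iff] at h
      obtain ⟨m, hm⟩ := h
      exact ⟨m, fun _ => hm⟩
    · exact ⟨0, fun h' => absurd h' h⟩
  choose m hm using step
  let D : ℕ → Set (ℕ → ℕ) := fun k =>
    Nat.rec univ (fun k D => D ∩ {x | x k ≤ m k D}) k
  have hD_succ : ∀ k, D (k + 1) = D k ∩ {x | x k ≤ m k (D k)} := fun k => rfl
  have hD : ∀ k, c < μ (f '' D k) := by
    intro k
    induction k with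
    | zero => simpa [D] using hc
    | succ k ih => rw [hD_succ]; exact hm k _ ih
  let n : ℕ → ℕ := fun k => m k (D k)
  have hDn : ∀ k x, x ∈ D k → ∀ i < k, x i ≤ n i := by
    intro k
    induction k with
    | zero => intro x _ i hi; omega
    | succ k ih =>
      intro x hx i hi
      rw [hD_succ] at hx
      rcases Nat.lt_succ_iff_lt_or_eq.1 hi with h | rfl
      · exact ih x hx.1 i h
      · exact hx.2
  have hK : IsCompact (Set.pi univ fun k => Iic (n k)) :=
    isCompact_univ_pi fun k => (Set.finite_Iic (n k)).isCompact
  refine ⟨f '' Set.pi univ fun k => Iic (n k), hK.image hf, image_subset_range _ _, ?_⟩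
  by_contra! hlt
  obtain ⟨V, hKV, hV, hVc⟩ := Set.exists_isOpen_lt_of_lt _ c hlt
  have hex : ∀ k, ∃ x ∈ D k, f x ∉ V := by
    intro k
    by_contra! hcon
    exact absurd ((hD k).trans_le (measure_mono (image_subset_iff.2 hcon))) hVc.not_gt
  choose x hxD hxV using hex
  -- Truncation moves `x k` into the compact box without changing its first `k` coordinates.
  obtain ⟨y, hy, φ, hφ, hlim⟩ := hK.tendsto_subseq (x := fun k i => min (x k i) (n i))
    (fun k i _ => mem_Iic.2 (min_le_right _ _))
  have hlim' : Tendsto (fun j => x (φ j)) atTop (nhds y) := by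
    rw [tendsto_pi_nhds] at hlim ⊢
    intro i
    refine (hlim i).congr' ?_
    filter_upwards [eventually_gt_atTop i] with j hj
    exact min_eq_left (hDn _ _ (hxD (φ j)) i (hj.trans_le hφ.le_apply))
  have hyV : f y ∈ V := hKV (mem_image_of_mem f hy)
  have := ((hf.tendsto y).comp hlim').eventually (hV.mem_nhds hyV)
  obtain ⟨j, hj⟩ := this.exists
  exact hxV _ hj

/-- Universal measurability of analytic sets. -/
lemma analyticSet_nullMeasurableSet {X : Type*} [MetricSpace X] [MeasurableSpace X]
    [BorelSpace X] (μ : Measure X) [IsFiniteMeasure μ] {S : Set X} (hS : AnalyticSet S) :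
    NullMeasurableSet S μ := by
  rw [AnalyticSet] at hS
  rcases hS with rfl | ⟨f, hf, rfl⟩
  · exact MeasurableSet.empty.nullMeasurableSet
  rcases eq_or_ne (μ (range f)) 0 with h0 | h0
  · exact NullMeasurableSet.of_null h0
  obtain ⟨c, -, hc, hlim⟩ := exists_seq_strictMono_tendsto' (pos_iff_ne_zero.2 h0)
  choose K hKc hKs hKm using fun n =>
    exists_isCompact_subset_range_le_measure μ hf (hc n).2
  have hL : MeasurableSet (⋃ n, K n) := MeasurableSet.iUnion fun n => (hKc n).measurableSet
  have hle : μ (range f) ≤ μ (⋃ n, K n) :=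
    le_of_tendsto' hlim fun n => (hKm n).trans (measure_mono (subset_iUnion K n))
  exact hL.nullMeasurableSet.congr (ae_eq_of_subset_of_measure_ge (iUnion_subset hKs) hle
    hL.nullMeasurableSet (measure_ne_top _ _))

/-! ### The completed σ-algebra -/

lemma mem_completionSets_iff {α : Type*} {m : MeasurableSpace α} {μ : Measure α} {A : Set α} :
    A ∈ completionSets m μ ↔ NullMeasurableSet A μ := by
  constructor
  · rintro ⟨E, G, hE, _, hEA, hAG, h0⟩
    refine hE.nullMeasurableSet.congr (hEA.eventuallyLE.antisymm ?_)
    exact ae_le_set.2 (measure_mono_null (sdiff_subset_sdiff_left hAG) h0)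
  · intro h
    obtain ⟨E, hEA, hE, hEe⟩ := h.exists_measurable_subset_ae_eq
    obtain ⟨G, hAG, hG, hGe⟩ := h.exists_measurable_superset_ae_eq
    exact ⟨E, G, hE, hG, hEA, hAG, ae_le_set.1 (hGe.trans hEe.symm).le⟩

lemma starMeasurable_iff {T : ℝ} {Ω : Type*} [MeasurableSpace Ω] {F : ℝ → MeasurableSpace Ω}
    {P : Measure Ω} {l : ℕ} {u : Set.Icc (0 : ℝ) T × Ω → EuclideanSpace ℝ (Fin l)} :
    starMeasurable T Ω F P u ↔ AEMeasurable[progSigma T Ω F] u (nuG T Ω F P) := by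
  constructor
  · intro h
    have : @NullMeasurable _ _ (progSigma T Ω F) _ u (nuG T Ω F P) := fun B hB =>
      mem_completionSets_iff.1 (h B hB)
    exact this.aemeasurable
  · intro h B hB
    exact mem_completionSets_iff.2 (h.nullMeasurable hB)

lemma isFiniteMeasure_nuG (T : ℝ) {Ω : Type*} [MeasurableSpace Ω] (F : ℝ → MeasurableSpace Ω)
    (P : Measure Ω) [IsProbabilityMeasure P] : IsFiniteMeasure (nuG T Ω F P) := by
  have : IsFiniteMeasure (lebIcc T) := by
    refine ⟨?_⟩
    rw [lebIcc, comap_subtype_coe_apply measurableSet_Icc, image_univ, Subtype.range_coe]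
    exact measure_Icc_lt_top
  exact isFiniteMeasure_trim (progSigma_le T Ω F)

/-! ### Measurability of the adjacent cone -/

lemma mem_adjacentCone_iff {E : Type*} [NormedAddCommGroup E] [NormedSpace ℝ E] {U : Set E}
    {x v : E} : v ∈ adjacentCone U x ↔ ∀ n : ℕ, ∃ m : ℕ, ∀ h : ℝ, 0 < h → h < 1 / ((m : ℝ) + 1) →
      Metric.infDist (x + h • v) U ≤ h * (1 / ((n : ℝ) + 1)) := by
  have key : ∀ (n : ℕ) (h : ℝ), 0 < h → (Metric.infDist (x + h • v) U / h ≤ 1 / ((n : ℝ) + 1) ↔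
      Metric.infDist (x + h • v) U ≤ h * (1 / ((n : ℝ) + 1))) := fun n h hh => by
    rw [div_le_iff₀ hh, mul_comm]
  constructor
  · intro hv n
    have h1 : ∀ᶠ h in nhdsWithin (0 : ℝ) (Ioi 0),
        Metric.infDist (x + h • v) U / h < 1 / ((n : ℝ) + 1) :=
      Tendsto.eventually_lt_const Nat.one_div_pos_of_nat hv
    obtain ⟨ε, hε, hsub⟩ := mem_nhdsGT_iff_exists_Ioo_subset.1 h1
    obtain ⟨m, hm⟩ := exists_nat_one_div_lt (show (0 : ℝ) < ε from hε)
    exact ⟨m, fun h hh hhm => (key n h hh).1 (hsub ⟨hh, hhm.trans hm⟩).le⟩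
  · intro H
    change Tendsto _ _ _
    rw [Metric.tendsto_nhds]
    intro ε hε
    obtain ⟨n, hn⟩ := exists_nat_one_div_lt hε
    obtain ⟨m, hm⟩ := H n
    filter_upwards [Ioo_mem_nhdsGT (show (0 : ℝ) < 1 / ((m : ℝ) + 1) from
      Nat.one_div_pos_of_nat)] with h hh
    rw [Real.dist_eq, sub_zero, abs_of_nonneg (div_nonneg Metric.infDist_nonneg hh.1.le)]
    exact ((key n h hh.1).2 (hm h hh.1 hh.2)).trans_lt hn

/-- The graph is an `F_{σδ}` set: for a fixed step bound the condition is an intersection of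
closed conditions, one for each `h`. -/
lemma measurableSet_graph_adjacentCone {E : Type*} [NormedAddCommGroup E] [NormedSpace ℝ E]
    [MeasurableSpace E] [BorelSpace E] [SecondCountableTopology E] (U : Set E) :
    MeasurableSet {q : E × E | q.2 ∈ adjacentCone U q.1} := by
  have : {q : E × E | q.2 ∈ adjacentCone U q.1} = ⋂ n : ℕ, ⋃ m : ℕ, {q : E × E |
      ∀ h : ℝ, 0 < h → h < 1 / ((m : ℝ) + 1) →
        Metric.infDist (q.1 + h • q.2) U ≤ h * (1 / ((n : ℝ) + 1))} := by
    ext q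
    simp only [mem_ofPred_eq, mem_iInter, mem_iUnion, mem_adjacentCone_iff]
  rw [this]
  refine MeasurableSet.iInter fun n => MeasurableSet.iUnion fun m => IsClosed.measurableSet ?_
  simp only [ofPred_forall]
  refine isClosed_iInter fun h => isClosed_iInter fun _ => isClosed_iInter fun _ => ?_
  exact isClosed_le ((Metric.continuous_infDist_pt U).comp (by fun_prop)) continuous_const

/-- The cone-valued map along `u` is measurable up to null sets: the set in question is the
preimage under `u` of the projection of a Borel set, which is analytic. -/
lemma nullMeasurableSet_adjacentCone_inter {α E : Type*} {mα : MeasurableSpace α} (μ : Measure α)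
    [IsFiniteMeasure μ] [NormedAddCommGroup E] [NormedSpace ℝ E] [MeasurableSpace E] [BorelSpace E]
    [SecondCountableTopology E] [CompleteSpace E] (U : Set E) {u : α → E} (hu : AEMeasurable u μ)
    {A : Set E} (hA : MeasurableSet A) :
    NullMeasurableSet {p | (adjacentCone U (u p) ∩ A).Nonempty} μ := by
  let S : Set E := Prod.fst '' ({q : E × E | q.2 ∈ adjacentCone U q.1} ∩ Prod.snd ⁻¹' A)
  have hS : AnalyticSet S := ((measurableSet_graph_adjacentCone U).inter
    (measurable_snd hA)).analyticSet_image measurable_fst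
  have hSn : NullMeasurableSet S (μ.map (hu.mk u)) := analyticSet_nullMeasurableSet _ hS
  have heq : {p | (adjacentCone U (u p) ∩ A).Nonempty} = u ⁻¹' S := by
    ext p
    constructor
    · rintro ⟨v, hv, hvA⟩
      exact ⟨(u p, v), ⟨hv, hvA⟩, rfl⟩
    · rintro ⟨⟨x, v⟩, ⟨hv, hvA⟩, hx⟩
      obtain rfl : x = u p := hx
      exact ⟨v, hv, hvA⟩
  rw [heq]
  refine (hSn.preimage (hu.measurable_mk.quasiMeasurePreserving μ)).congr ?_
  filter_upwards [hu.ae_eq_mk] with p hp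
  exact congrArg (· ∈ S) hp.symm

/-! ### Almost-projections and the `L²` estimate -/

/-- A Borel almost-projection onto `U`: take the first point of a dense sequence of `U` that is
within `ε` of being optimal. -/
lemma exists_measurable_almost_proj {E : Type*} [NormedAddCommGroup E]
    [MeasurableSpace E] [BorelSpace E] [SecondCountableTopology E] {U : Set E} (hU : U.Nonempty)
    {ε : ℝ} (hε : 0 < ε) :
    ∃ π : E → E, Measurable π ∧ ∀ x, π x ∈ U ∧ ‖x - π x‖ ≤ Metric.infDist x U + ε := by
  classical
  have : Nonempty U := hU.to_subtype
  let d : ℕ → U := TopologicalSpace.denseSeq U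
  have hex : ∀ x : E, ∃ n, dist x (d n : E) < Metric.infDist x U + ε := by
    intro x
    obtain ⟨y, hy, hxy⟩ := (Metric.infDist_lt_iff hU).1 (lt_add_of_pos_right _ hε :
      Metric.infDist x U < Metric.infDist x U + ε)
    have ho : IsOpen {z : U | dist x (z : E) < Metric.infDist x U + ε} :=
      isOpen_lt (by fun_prop) continuous_const
    obtain ⟨n, hn⟩ := (TopologicalSpace.denseRange_denseSeq U).exists_mem_open ho ⟨⟨y, hy⟩, hxy⟩
    exact ⟨n, hn⟩
  refine ⟨fun x => d (Nat.find (hex x)), ?_, fun x => ⟨(d _).2, ?_⟩⟩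
  · have hfind : Measurable fun x => Nat.find (hex x) := measurable_find hex fun k =>
      (isOpen_lt (by fun_prop)
        ((Metric.continuous_infDist_pt U).add continuous_const)).measurableSet
    exact (measurable_from_nat (f := fun n => (d n : E))).comp hfind
  · rw [← dist_eq_norm]
    exact (Nat.find_spec (hex x)).le

/-- If `u ∈ U` and `v ∈ T_U(u)` almost everywhere, with `v` square integrable, then the difference
quotient of the distance (plus the slack `h` of the almost-projection) tends to `0` in `L²`; the
domination is `dist(u + h v, U) ≤ h ‖v‖`. -/
lemma tendsto_eLpNorm_infDist_div {α E : Type*} {mα : MeasurableSpace α} (μ : Measure α)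
    [IsFiniteMeasure μ] [NormedAddCommGroup E] [NormedSpace ℝ E] [MeasurableSpace E] [BorelSpace E]
    [SecondCountableTopology E] {U : Set E} {u v : α → E} (hu : AEMeasurable u μ)
    (hv : AEMeasurable v μ) (hv2 : eLpNorm v 2 μ < ⊤) (huU : ∀ᵐ p ∂μ, u p ∈ U)
    (hvU : ∀ᵐ p ∂μ, v p ∈ adjacentCone U (u p)) :
    Tendsto (fun h : ℝ => eLpNorm (fun p => Metric.infDist (u p + h • v p) U / h + h) 2 μ)
      (nhdsWithin 0 (Ioi 0)) (nhds 0) := by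
  have hb : MemLp (fun p => ‖v p‖ + 1) 2 μ :=
    (MemLp.norm ⟨hv.aestronglyMeasurable, hv2⟩).add (memLp_const 1)
  have hbfin := (lintegral_rpow_enorm_lt_top_of_eLpNorm_lt_top two_ne_zero
    ENNReal.ofNat_ne_top hb.2).ne
  simp only [eLpNorm_eq_lintegral_rpow_enorm_toReal two_ne_zero ENNReal.ofNat_ne_top]
  have hlim := tendsto_lintegral_filter_of_dominated_convergence' (μ := μ)
    (l := nhdsWithin (0 : ℝ) (Ioi 0))
    (F := fun h p => ‖Metric.infDist (u p + h • v p) U / h + h‖ₑ ^ (2 : ℝ≥0∞).toReal)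
    (f := fun _ => 0) (fun p => ‖‖v p‖ + 1‖ₑ ^ (2 : ℝ≥0∞).toReal) ?_ ?_ hbfin ?_
  · have := (ENNReal.continuous_rpow_const (y := 1 / (2 : ℝ≥0∞).toReal)).tendsto _ |>.comp hlim
    simpa [Function.comp_def] using this
  · refine Eventually.of_forall fun h => ?_
    have hm : AEMeasurable (fun p => Metric.infDist (u p + h • v p) U) μ :=
      (Metric.continuous_infDist_pt U).measurable.comp_aemeasurable (hu.add (hv.const_smul h))
    exact (((hm.div_const h).add_const h).enorm).pow_const _
  · filter_upwards [Ioo_mem_nhdsGT (zero_lt_one' ℝ)] with h hh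
    filter_upwards [huU] with p hp
    have h1 : Metric.infDist (u p + h • v p) U ≤ h * ‖v p‖ := by
      refine (Metric.infDist_le_dist_of_mem hp).trans_eq ?_
      rw [dist_eq_norm, add_sub_cancel_left, norm_smul, Real.norm_of_nonneg hh.1.le]
    have h2 : Metric.infDist (u p + h • v p) U / h ≤ ‖v p‖ := by
      rw [div_le_iff₀ hh.1, mul_comm]; exact h1
    have h3 : 0 ≤ Metric.infDist (u p + h • v p) U / h :=
      div_nonneg Metric.infDist_nonneg hh.1.le
    refine ENNReal.rpow_le_rpow ?_ ENNReal.toReal_nonneg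
    rw [enorm_le_iff_norm_le, Real.norm_of_nonneg (add_nonneg h3 hh.1.le),
      Real.norm_of_nonneg (by positivity)]
    exact add_le_add h2 hh.2.le
  · filter_upwards [hvU] with p hp
    have h1 : Tendsto (fun h : ℝ => Metric.infDist (u p + h • v p) U / h + h)
        (nhdsWithin 0 (Ioi 0)) (nhds (0 + 0)) :=
      Tendsto.add hp (tendsto_id.mono_left nhdsWithin_le_nhds)
    rw [add_zero] at h1
    have h2 := (ENNReal.continuous_rpow_const (y := (2 : ℝ≥0∞).toReal)).tendsto _ |>.comp h1.enorm
    simpa [Function.comp_def] using h2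

/-- Stability of the admissible class under almost-projection: for `h > 0`, composing `u + h v`
with an almost-projection onto `U` of slack `h²` gives a square integrable `U`-valued `g` whose
`L²` distance to `u + h v` is controlled by the pointwise distance of `u + h v` to `U`. -/
lemma exists_almost_proj_comp {α E : Type*} {mα : MeasurableSpace α} (μ : Measure α)
    [IsFiniteMeasure μ] [NormedAddCommGroup E] [NormedSpace ℝ E] [MeasurableSpace E] [BorelSpace E]
    [SecondCountableTopology E] {U : Set E} (hU : U.Nonempty) {u v : α → E}
    (hu : AEMeasurable u μ) (hu2 : eLpNorm u 2 μ < ⊤)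
    (hv : AEMeasurable v μ) (hv2 : eLpNorm v 2 μ < ⊤) (huU : ∀ᵐ p ∂μ, u p ∈ U)
    {h : ℝ} (hh : 0 < h) :
    ∃ g : α → E, AEMeasurable g μ ∧ eLpNorm g 2 μ < ⊤ ∧ (∀ p, g p ∈ U) ∧
      eLpNorm (fun p => (u p + h • v p) - g p) 2 μ ≤
        eLpNorm (fun p => Metric.infDist (u p + h • v p) U / h + h) 2 μ * ENNReal.ofReal h := by
  obtain ⟨π, hπm, hπ⟩ := exists_measurable_almost_proj hU (mul_pos hh hh)
  have hw : AEMeasurable (fun p => u p + h • v p) μ := hu.add (hv.const_smul h)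
  refine ⟨fun p => π (u p + h • v p), hπm.comp_aemeasurable hw, ?_, fun p => (hπ _).1, ?_⟩
  · have hu' : MemLp u 2 μ := ⟨hu.aestronglyMeasurable, hu2⟩
    have hv' : MemLp v 2 μ := ⟨hv.aestronglyMeasurable, hv2⟩
    have hb : MemLp (fun p => ‖u p + h • v p‖ + (h * ‖v p‖ + h * h)) 2 μ :=
      (hu'.add (hv'.const_smul h)).norm.add ((hv'.norm.const_mul h).add (memLp_const _))
    refine (eLpNorm_mono_ae_real ?_).trans_lt hb.2
    filter_upwards [huU] with p hp
    have h1 : Metric.infDist (u p + h • v p) U ≤ h * ‖v p‖ := by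
      refine (Metric.infDist_le_dist_of_mem hp).trans_eq ?_
      rw [dist_eq_norm, add_sub_cancel_left, norm_smul, Real.norm_of_nonneg hh.le]
    have h2 := (hπ (u p + h • v p)).2
    have h3 := norm_le_norm_add_norm_sub (u p + h • v p) (π (u p + h • v p))
    linarith
  · calc eLpNorm (fun p => (u p + h • v p) - π (u p + h • v p)) 2 μ
        ≤ eLpNorm (h • fun p => Metric.infDist (u p + h • v p) U / h + h) 2 μ := by
          refine eLpNorm_mono_real fun p => (hπ _).2.trans_eq ?_
          simp only [Pi.smul_apply, smul_eq_mul]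
          field_simp
      _ = _ := by
          rw [eLpNorm_const_smul, Real.enorm_of_nonneg hh.le, mul_comm]

/-- For every `u ∈ 𝒰*_ad`: (i) the set-valued map `(t,ω) ↦ T_U(u(t,ω))` is
`𝒢*`-measurable; (ii) `𝒯*_u := {v ∈ ℒ²_𝔽 : v(t,ω) ∈ T_U(u(t,ω)) μ*-a.e.}` is
contained in the adjacent cone `T_{𝒰*_ad}(u)` of `𝒰*_ad` at `u` in `ℒ²_𝔽`. -/
theorem adjacentCone_star_measurable_and_subset
    (T : ℝ) (hT : 0 < T) {Ω : Type*} [mΩ : MeasurableSpace Ω]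
    (P : Measure Ω) [IsProbabilityMeasure P] (hPc : P.IsComplete)
    (F : ℝ → MeasurableSpace Ω)
    (hFle : ∀ t : ℝ, F t ≤ mΩ)
    (hFmono : ∀ s t : ℝ, s ≤ t → F s ≤ F t)
    {l : ℕ} (U : Set (EuclideanSpace ℝ (Fin l))) (hUcl : IsClosed U)
    (hUne : U.Nonempty)
    (u : Set.Icc (0 : ℝ) T × Ω → EuclideanSpace ℝ (Fin l))
    (hu : u ∈ UadStar T Ω F P U) :
    (∀ A : Set (EuclideanSpace ℝ (Fin l)), MeasurableSet A →
        {p : Set.Icc (0 : ℝ) T × Ω | (adjacentCone U (u p) ∩ A).Nonempty} ∈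
          completionSets (progSigma T Ω F) (nuG T Ω F P)) ∧
      {v ∈ L2Star T Ω F P l | ∀ᵐ p ∂(nuG T Ω F P), v p ∈ adjacentCone U (u p)} ⊆
        adjacentConeL2 (nuG T Ω F P) (L2Star T Ω F P l) (UadStar T Ω F P U) u := by
  have hfin := isFiniteMeasure_nuG T F P
  obtain ⟨⟨hum, hu2⟩, huU⟩ := hu
  have hum' := starMeasurable_iff.1 hum
  refine ⟨fun A hA => mem_completionSets_iff.2
    (nullMeasurableSet_adjacentCone_inter _ U hum' hA), ?_⟩
  rintro v ⟨⟨hvm, hv2⟩, hvU⟩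
  have hvm' := starMeasurable_iff.1 hvm
  refine ⟨⟨hvm, hv2⟩, ?_⟩
  refine tendsto_of_tendsto_of_tendsto_of_le_of_le' tendsto_const_nhds
    (tendsto_eLpNorm_infDist_div (nuG T Ω F P) hum' hvm' hv2 huU hvU)
    (Eventually.of_forall fun _ => zero_le) ?_
  filter_upwards [self_mem_nhdsWithin] with h hh
  obtain ⟨g, hg, hg2, hgU, hle⟩ := exists_almost_proj_comp (nuG T Ω F P) hUne hum' hu2 hvm' hv2
    huU (show 0 < h from hh)
  refine ENNReal.div_le_of_le_mul (le_trans ?_ hle)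
  exact iInf₂_le g ⟨⟨starMeasurable_iff.2 hg, hg2⟩, Eventually.of_forall hgU⟩
end

section
/- Let T > 0, (Ω, ℱ, P) a complete probability space with filtration 𝔽 = (ℱ_t)_{t∈[0,T]}, λ Lebesgue measure on [0,T], 𝒢 := {A ∈ ℬ([0,T])⊗ℱ : A_t ∈ ℱ_t for every t ∈ [0,T]}, and ([0,T]×Ω, 𝒢*, μ*) the completion of ([0,T]×Ω, 𝒢, λ×P). Let U ⊆ R^l be a nonempty closed set, L²_𝔽(0,T;R^l) the Banach space of 𝒢-measurable processes with E∫₀^T |y(t)|² dt < ∞, 𝒰_ad := {u ∈ L²_𝔽(0,T;R^l) : u(t,ω) ∈ U for λ×P-a.e. (t,ω)}, ℒ²_𝔽(0,T;R^l) the space of 𝒢*-measurable μ*-square-integrable functions, and 𝒰*_ad := {u ∈ ℒ²_𝔽(0,T;R^l) : u(t,ω) ∈ U for μ*-a.e. (t,ω)}. Let ū ∈ 𝒰_ad, and let F : [0,T]×Ω → R^l be ℬ([0,T])⊗ℱ-measurable, 𝔽-adapted, with E∫₀^T |F(t)|² dt < ∞, satisfying E∫₀^T ⟨F(t), v(t)⟩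 dt ≥ 0 for every v ∈ T_{𝒰_ad}(ū) (adjacent cone in L²_𝔽(0,T;R^l)). Then ∫_{[0,T]×Ω} ⟨F(t,ω), v*(t,ω)⟩ dμ*(t,ω) ≥ 0 for every v* ∈ T_{𝒰*_ad}(ū), the adjacent cone of 𝒰*_ad at ū in ℒ²_𝔽(0,T;R^l). -/
/-!
Passing from `𝒢` to its completion `𝒢*` only changes functions on null sets. A `𝒢*`-measurable
function is null-measurable for `λ × P` on `𝒢`, and since `ℝ^l` has a countably generated Borel
σ-algebra it agrees almost everywhere with a `𝒢`-measurable function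
(`starMeasurable.aemeasurable`). Replacing by such a version every element of `𝒰*_ad` gives an
element of `𝒰_ad` (`exists_mem_L2Adapted_ae_eq`, `exists_mem_Uad_ae_eq`), and for a
`𝒢`-measurable version `v` of `v*` the `L²`-distance of `ū + h v` to `𝒰_ad` is at most that of
`ū + h v*` to `𝒰*_ad`. So `v` lies in the adjacent cone of `𝒰_ad`, and the integrals of
`⟨F, v⟩` and `⟨F, v*⟩` coincide.
-/

open MeasureTheory Filter Set
open scoped ENNReal RealInnerProductSpace

/-- The space `L²_𝔽(0,T;ℝ^l)` of `𝒢`-measurable processes `y` with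
`E ∫₀ᵀ |y(t)|² dt < ∞`, as a set of functions on `[0,T] × Ω`. -/
def L2Adapted (T : ℝ) (Ω : Type*) [mΩ : MeasurableSpace Ω]
    (F : ℝ → MeasurableSpace Ω) (P : Measure Ω) (l : ℕ) :
    Set (Set.Icc (0 : ℝ) T × Ω → EuclideanSpace ℝ (Fin l)) :=
  {y | Measurable[progSigma T Ω F] y ∧ eLpNorm y 2 ((lebIcc T).prod P) < ⊤}

/-- The admissible set `𝒰_ad := {u ∈ L²_𝔽 : u(t,ω) ∈ U, λ×P-a.e.}`. -/
def Uad (T : ℝ) (Ω : Type*) [mΩ : MeasurableSpace Ω]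
    (F : ℝ → MeasurableSpace Ω) (P : Measure Ω) {l : ℕ}
    (U : Set (EuclideanSpace ℝ (Fin l))) :
    Set (Set.Icc (0 : ℝ) T × Ω → EuclideanSpace ℝ (Fin l)) :=
  {u ∈ L2Adapted T Ω F P l | ∀ᵐ p ∂((lebIcc T).prod P), u p ∈ U}

lemma nullMeasurableSet_of_mem_completionSets {α : Type*} {m : MeasurableSpace α}
    {μ : Measure α} {A : Set α} (hA : A ∈ completionSets m μ) : NullMeasurableSet A μ := by
  obtain ⟨E, G, hE, -, hEA, hAG, hnull⟩ := hA
  have h0 : μ (A \ E) = 0 := measure_mono_null (sdiff_subset_sdiff_left hAG) hnull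
  have h1 := hE.nullMeasurableSet.union_null h0
  rwa [union_sdiff_cancel hEA] at h1

lemma starMeasurable.aemeasurable {T : ℝ} {Ω : Type*} [mΩ : MeasurableSpace Ω]
    {F : ℝ → MeasurableSpace Ω} {P : Measure Ω} {l : ℕ}
    {u : Set.Icc (0 : ℝ) T × Ω → EuclideanSpace ℝ (Fin l)}
    (hu : starMeasurable T Ω F P u) : AEMeasurable[progSigma T Ω F] u (nuG T Ω F P) := by
  refine NullMeasurable.aemeasurable ?_
  intro B hB
  exact nullMeasurableSet_of_mem_completionSets (hu B hB)

/-- Every class in `ℒ²_𝔽` has a representative in `L²_𝔽`. -/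
lemma exists_mem_L2Adapted_ae_eq {T : ℝ} {Ω : Type*} [mΩ : MeasurableSpace Ω]
    {F : ℝ → MeasurableSpace Ω} {P : Measure Ω} {l : ℕ}
    {u : Set.Icc (0 : ℝ) T × Ω → EuclideanSpace ℝ (Fin l)}
    (hu : u ∈ L2Star T Ω F P l) :
    ∃ w ∈ L2Adapted T Ω F P l, u =ᵐ[nuG T Ω F P] w := by
  obtain ⟨w, hw, huw⟩ := hu.1.aemeasurable
  refine ⟨w, ⟨hw, ?_⟩, huw⟩
  rw [← eLpNorm_trim (progSigma_le T Ω F) hw.stronglyMeasurable]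
  exact (eLpNorm_congr_ae huw).symm.trans_lt hu.2

/-- Every class in `𝒰*_ad` has a representative in `𝒰_ad`. -/
lemma exists_mem_Uad_ae_eq {T : ℝ} {Ω : Type*} [mΩ : MeasurableSpace Ω]
    {F : ℝ → MeasurableSpace Ω} {P : Measure Ω} {l : ℕ}
    {U : Set (EuclideanSpace ℝ (Fin l))}
    {u : Set.Icc (0 : ℝ) T × Ω → EuclideanSpace ℝ (Fin l)}
    (hu : u ∈ UadStar T Ω F P U) :
    ∃ w ∈ Uad T Ω F P U, u =ᵐ[nuG T Ω F P] w := by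
  obtain ⟨w, hw, huw⟩ := exists_mem_L2Adapted_ae_eq hu.1
  refine ⟨w, ⟨hw, ?_⟩, huw⟩
  refine ae_of_ae_trim (progSigma_le T Ω F) ?_
  filter_upwards [huw, hu.2] with p h1 h2
  rwa [← h1]

/-- The `𝒢`-measurable versions of the elements of `T_{𝒰*_ad}(ū)` belong to `T_{𝒰_ad}(ū)`. -/
lemma mem_adjacentConeL2_of_ae_eq {T : ℝ} {Ω : Type*} [mΩ : MeasurableSpace Ω]
    {F : ℝ → MeasurableSpace Ω} {P : Measure Ω} {l : ℕ}
    {U : Set (EuclideanSpace ℝ (Fin l))}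
    {ubar v vstar : Set.Icc (0 : ℝ) T × Ω → EuclideanSpace ℝ (Fin l)}
    (hubar : Measurable[progSigma T Ω F] ubar)
    (hvstar : vstar ∈ adjacentConeL2 (nuG T Ω F P)
      (L2Star T Ω F P l) (UadStar T Ω F P U) ubar)
    (hv : v ∈ L2Adapted T Ω F P l) (hvv : vstar =ᵐ[nuG T Ω F P] v) :
    v ∈ adjacentConeL2 ((lebIcc T).prod P) (L2Adapted T Ω F P l) (Uad T Ω F P U) ubar := by
  refine ⟨hv, tendsto_of_tendsto_of_tendsto_of_le_of_le tendsto_const_nhds hvstar.2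
    (fun _ => zero_le) fun h => ?_⟩
  refine ENNReal.div_le_div_right (le_iInf₂ fun g hg => ?_) _
  obtain ⟨g', hg', hgg⟩ := exists_mem_Uad_ae_eq hg
  refine (iInf₂_le g' hg').trans (le_of_eq ?_)
  have hmeas : Measurable[progSigma T Ω F] fun p => (ubar p + h • v p) - g' p :=
    (hubar.add (hv.1.const_smul h)).sub hg'.1.1
  rw [← eLpNorm_trim (progSigma_le T Ω F) hmeas.stronglyMeasurable]
  refine eLpNorm_congr_ae ?_
  change _ =ᵐ[nuG T Ω F P] _
  filter_upwards [hvv, hgg] with p h1 h2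
  rw [h1, h2]

/-- If the integral necessary condition `E ∫₀ᵀ ⟨F(t), v(t)⟩ dt ≥ 0` holds for every
`v` in the adjacent cone `T_{𝒰_ad}(ū)` (in `L²_𝔽`), then
`∫ ⟨F, v*⟩ dμ* ≥ 0` for every `v*` in the adjacent cone `T_{𝒰*_ad}(ū)` of the
completed admissible set `𝒰*_ad` at `ū` in `ℒ²_𝔽`. -/
theorem integral_condition_extends_to_completion
    (T : ℝ) (hT : 0 < T) {Ω : Type*} [mΩ : MeasurableSpace Ω]
    (P : Measure Ω) [IsProbabilityMeasure P] (hPc : P.IsComplete)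
    (F : ℝ → MeasurableSpace Ω)
    (hFle : ∀ t : ℝ, F t ≤ mΩ)
    (hFmono : ∀ s t : ℝ, s ≤ t → F s ≤ F t)
    {l : ℕ} (U : Set (EuclideanSpace ℝ (Fin l))) (hUcl : IsClosed U)
    (hUne : U.Nonempty)
    (ubar : Set.Icc (0 : ℝ) T × Ω → EuclideanSpace ℝ (Fin l))
    (hubar : ubar ∈ Uad T Ω F P U)
    (Ff : Set.Icc (0 : ℝ) T × Ω → EuclideanSpace ℝ (Fin l))
    (hFfmeas : Measurable Ff)
    (hFfadapted : ∀ t : Set.Icc (0 : ℝ) T,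
      Measurable[F t.1] fun ω : Ω => Ff (t, ω))
    (hFfint : eLpNorm Ff 2 ((lebIcc T).prod P) < ⊤)
    (hpos : ∀ v ∈ adjacentConeL2 ((lebIcc T).prod P)
        (L2Adapted T Ω F P l) (Uad T Ω F P U) ubar,
      0 ≤ ∫ p, ⟪Ff p, v p⟫ ∂((lebIcc T).prod P)) :
    ∀ vstar ∈ adjacentConeL2 (nuG T Ω F P)
        (L2Star T Ω F P l) (UadStar T Ω F P U) ubar,
      0 ≤ ∫ p, ⟪Ff p, vstar p⟫ ∂(nuG T Ω F P) := by
  intro vstar hvstar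
  obtain ⟨v, hv, hvv⟩ := exists_mem_L2Adapted_ae_eq hvstar.1
  have hFf : Measurable[progSigma T Ω F] Ff :=
    fun B hB => ⟨hFfmeas hB, fun t => hFfadapted t hB⟩
  have hinner : Measurable[progSigma T Ω F] fun p => ⟪Ff p, v p⟫ := hFf.inner hv.1
  have hint : ∫ p, ⟪Ff p, vstar p⟫ ∂(nuG T Ω F P) = ∫ p, ⟪Ff p, v p⟫ ∂(nuG T Ω F P) := by
    refine integral_congr_ae ?_
    filter_upwards [hvv] with p hp
    rw [hp]
  rw [hint]
  refine (hpos v (mem_adjacentConeL2_of_ae_eq hubar.1.1 hvstar hv hvv)).trans_eq ?_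
  exact integral_trim (progSigma_le T Ω F) hinner.stronglyMeasurable
end

section
/- Let T > 0, (Ω, ℱ, P) a complete probability space with filtration 𝔽 = (ℱ_t)_{t∈[0,T]}, λ Lebesgue measure on [0,T], 𝒢 := {A ∈ ℬ([0,T])⊗ℱ : A_t ∈ ℱ_t for every t ∈ [0,T]}, and ([0,T]×Ω, 𝒢*, μ*) the completion of ([0,T]×Ω, 𝒢, λ×P). Let U ⊆ R^l be a nonempty closed set, L²_𝔽(0,T;R^l) the Banach space of 𝒢-measurable processes with E∫₀^T |y(t)|² dt < ∞, 𝒰_ad := {u ∈ L²_𝔽(0,T;R^l) : u(t,ω) ∈ U for λ×P-a.e. (t,ω)}, ℒ²_𝔽(0,T;R^l) the space of 𝒢*-measurable μ*-square-integrable functions, and 𝒰*_ad := {u ∈ ℒ²_𝔽(0,T;R^l) : u(t,ω) ∈ U for μ*-a.e. (t,ω)}. Let ū ∈ 𝒰_ad and v* ∈ T_{𝒰*_ad}(ū), the adjacent cone of 𝒰*_ad at ū in ℒ²_𝔽(0,T;R^l). Then there exists v ∈ L²_𝔽(0,T;R^l) such that v = v* μ*-almost everywhere and v ∈ T_{𝒰_ad}(ū),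 the adjacent cone of 𝒰_ad at ū in L²_𝔽(0,T;R^l). -/
/-!
A `𝒢*`-measurable function is null-measurable for `λ × P` on `𝒢`, so, its values lying in a
countably generated space, it agrees almost everywhere with a `𝒢`-measurable function
(`starMeasurable.exists_measurable_ae_eq`). Passing to such versions changes neither `L²`-norms
nor almost sure membership in `U`, and for `𝒢`-measurable functions the norms under `λ × P` and
its restriction to `𝒢` coincide. Hence every competitor in `𝒰*_ad` has a version in `𝒰_ad` at the
same distance from `ū + h v`, where `v` is a version of `v*`; the distance quotient for `𝒰_ad` is
thus dominated by the one for `𝒰*_ad`, which tends to `0`.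
-/

open MeasureTheory Filter Set
open scoped ENNReal

lemma starMeasurable.exists_measurable_ae_eq {T : ℝ} {Ω : Type*} [mΩ : MeasurableSpace Ω]
    {F : ℝ → MeasurableSpace Ω} {P : Measure Ω} {l : ℕ}
    {u : Set.Icc (0 : ℝ) T × Ω → EuclideanSpace ℝ (Fin l)}
    (hu : starMeasurable T Ω F P u) :
    ∃ w, Measurable[progSigma T Ω F] w ∧ ∀ᵐ p ∂(nuG T Ω F P), w p = u p := by
  have hnull : @NullMeasurable _ _ (progSigma T Ω F) _ u (nuG T Ω F P) := by
    intro B hB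
    obtain ⟨E, G, hE, -, hEB, hBG, h0⟩ := hu B hB
    have hae : E =ᵐ[nuG T Ω F P] u ⁻¹' B :=
      Filter.EventuallyLE.antisymm (Eventually.of_forall hEB)
        (ae_le_set.2 (measure_mono_null (sdiff_subset_sdiff_left hBG) h0))
    exact hE.nullMeasurableSet.congr hae
  obtain ⟨w, hw, hwu⟩ := hnull.aemeasurable
  exact ⟨w, hw, hwu.symm⟩

lemma eLpNorm_nuG {T : ℝ} {Ω : Type*} [mΩ : MeasurableSpace Ω]
    {F : ℝ → MeasurableSpace Ω} {P : Measure Ω} {l : ℕ}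
    {w : Set.Icc (0 : ℝ) T × Ω → EuclideanSpace ℝ (Fin l)}
    (hw : Measurable[progSigma T Ω F] w) :
    eLpNorm w 2 (nuG T Ω F P) = eLpNorm w 2 ((lebIcc T).prod P) :=
  eLpNorm_trim _ hw.stronglyMeasurable

lemma L2Adapted_of_ae_eq {T : ℝ} {Ω : Type*} [mΩ : MeasurableSpace Ω]
    {F : ℝ → MeasurableSpace Ω} {P : Measure Ω} {l : ℕ}
    {u w : Set.Icc (0 : ℝ) T × Ω → EuclideanSpace ℝ (Fin l)}
    (hu : u ∈ L2Star T Ω F P l) (hw : Measurable[progSigma T Ω F] w)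
    (hwu : ∀ᵐ p ∂(nuG T Ω F P), w p = u p) : w ∈ L2Adapted T Ω F P l := by
  refine ⟨hw, ?_⟩
  rw [← eLpNorm_nuG hw, eLpNorm_congr_ae hwu]
  exact hu.2

/-- Every element `v*` of the adjacent cone `T_{𝒰*_ad}(ū)` (taken in the completed
space `ℒ²_𝔽`) admits a `𝒢`-measurable version `v ∈ L²_𝔽` with `v = v*` `μ*`-a.e.
which belongs to the adjacent cone `T_{𝒰_ad}(ū)` in `L²_𝔽`. -/
theorem adjacentCone_star_reduces_to_adapted
    (T : ℝ) (hT : 0 < T) {Ω : Type*} [mΩ : MeasurableSpace Ω]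
    (P : Measure Ω) [IsProbabilityMeasure P] (hPc : P.IsComplete)
    (F : ℝ → MeasurableSpace Ω)
    (hFle : ∀ t : ℝ, F t ≤ mΩ)
    (hFmono : ∀ s t : ℝ, s ≤ t → F s ≤ F t)
    {l : ℕ} (U : Set (EuclideanSpace ℝ (Fin l))) (hUcl : IsClosed U)
    (hUne : U.Nonempty)
    (ubar : Set.Icc (0 : ℝ) T × Ω → EuclideanSpace ℝ (Fin l))
    (hubar : ubar ∈ Uad T Ω F P U)
    (vstar : Set.Icc (0 : ℝ) T × Ω → EuclideanSpace ℝ (Fin l))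
    (hvstar : vstar ∈ adjacentConeL2 (nuG T Ω F P)
        (L2Star T Ω F P l) (UadStar T Ω F P U) ubar) :
    ∃ v ∈ L2Adapted T Ω F P l,
      (∀ᵐ p ∂(nuG T Ω F P), v p = vstar p) ∧
      v ∈ adjacentConeL2 ((lebIcc T).prod P)
        (L2Adapted T Ω F P l) (Uad T Ω F P U) ubar := by
  obtain ⟨hvL, hlim⟩ := hvstar
  obtain ⟨v, hv, hvv⟩ := hvL.1.exists_measurable_ae_eq
  have hvA : v ∈ L2Adapted T Ω F P l := L2Adapted_of_ae_eq hvL hv hvv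
  refine ⟨v, hvA, hvv, hvA, ?_⟩
  refine tendsto_of_tendsto_of_tendsto_of_le_of_le tendsto_const_nhds hlim
    (fun _ => zero_le) (fun h => ENNReal.div_le_div_right ?_ _)
  refine le_iInf₂ fun g hg => ?_
  obtain ⟨w, hw, hwg⟩ := hg.1.1.exists_measurable_ae_eq
  have hwU : w ∈ Uad T Ω F P U := by
    refine ⟨L2Adapted_of_ae_eq hg.1 hw hwg, ae_of_ae_trim (progSigma_le T Ω F) ?_⟩
    filter_upwards [hwg, hg.2] with p hp hpU
    rwa [hp]
  refine (iInf₂_le w hwU).trans (le_of_eq ?_)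
  have hm : Measurable[progSigma T Ω F] (fun p => (ubar p + h • v p) - w p) :=
    (hubar.1.1.add (hv.const_smul h)).sub hw
  rw [← eLpNorm_nuG hm]
  refine eLpNorm_congr_ae ?_
  filter_upwards [hvv, hwg] with p hp hp'
  rw [hp, hp']
end
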